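/- Let (J,Q,1) be a weak quadratic Jordan division algebra over a field k, let ε ∈ {1,−1}, and let δ : J → J be a k-linear map such that δ(a^{-1}) = −ε·δ(a)·Q_a^{-1} for every invertible a ∈ J. Then δ is an ε-derivation of J, i.e., δ(a·Q_b) = ε·δ(a)·Q_b + a·Q_{b,δ(b)} for all a,b ∈ J. -/

import Mathlib

/-!
Write `V_{a,b} x = Q_{a,x} b`. For mutually inverse `a` and `i`, linearizing `Q_{Q_a b} = Q_a Q_b Q_a`
in `b` and using `Q_{a,Q_a x} b = Q_a Q_{b,x} a` gives the two factorizations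
`Q_a Q_{c,i} = V_{a,c}` and `Q_{c,i} Q_a = V_{c,a}`; no linearization in `a`, which may fail over
small fields, is needed. Expanding both sides with them yields
`Q_{e-c⁻¹} Q_c = 1 - V_{e,c} + Q_e Q_c = Q_e Q_{c-e⁻¹}`.

With `a = c - e⁻¹` and `u = Q_c e - c = Q_c (e - c⁻¹)`, this says
`Q_u Q_a⁻¹ = Q_c Q_e` and `Q_u Q_c⁻¹ = Q_c Q_e - V_{c,e} + 1`, from which Hua's identity
`u⁻¹ = a⁻¹ - c⁻¹` follows. Applying `δ` to Hua's identity, and replacing each `δ (x⁻¹)` by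
`-ε Q_x⁻¹ (δ x)`, the same two operator identities turn the result into the `ε`-derivation rule for
`Q_c e`. The degenerate cases `c = 0`, `e = 0`, `e = c⁻¹` are immediate, the last from
`V_{c,c⁻¹} = 2`.
-/


/-- A weak quadratic Jordan algebra `(J, Q, 1)` over a field `k`.
Endomorphisms act on the right: `x·Q_a` is `Q a x`; a paper product `A B`
(apply `A`, then `B`) corresponds to the Mathlib product `B * A`. -/
structure WeakQuadraticJordan (k J : Type*) [Field k] [AddCommGroup J]
    [Module k J] where
  Q : J → Module.End k J
  one : J
  one_ne_zero : one ≠ 0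
  Q_smul : ∀ (t : k) (a : J), Q (t • a) = (t ^ 2) • Q a
  Qbil : J →ₗ[k] J →ₗ[k] Module.End k J
  Qbil_apply : ∀ a b : J, Qbil a b = Q (a + b) - Q a - Q b
  QJ1 : Q one = 1
  QJ2 : ∀ a b x : J, Qbil a (Q a x) b = Q a (Qbil b x a)
  QJ3 : ∀ a b : J, Q (Q a b) = Q a * Q b * Q a

namespace WeakQuadraticJordan

variable {k J : Type*} [Field k] [AddCommGroup J] [Module k J]

/-- `V W a b` is the endomorphism `V_{a,b} : x ↦ b·Q_{a,x}`. -/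
def V (W : WeakQuadraticJordan k J) (a b : J) : Module.End k J where
  toFun x := W.Qbil a x b
  map_add' x y := by simp
  map_smul' t x := by simp

/-- `δ` is an `ε`-derivation: `δ(a·Q_b) = ε·δ(a)·Q_b + a·Q_{b,δ(b)}`. -/
def IsEpsDerivation (W : WeakQuadraticJordan k J) (ε : k) (δ : Module.End k J) : Prop :=
  ∀ a b : J, δ (W.Q b a) = ε • W.Q b (δ a) + W.Qbil b (δ b) a

/-- Every nonzero element is invertible (`Q_a` is a unit of `End k J`). -/
def IsDivision (W : WeakQuadraticJordan k J) : Prop :=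
  ∀ a : J, a ≠ 0 → IsUnit (W.Q a)

end WeakQuadraticJordan


namespace WeakQuadraticJordan

variable {k J : Type*} [Field k] [AddCommGroup J] [Module k J]

/-- `i` is the inverse of the invertible element `a`, expressed through the elements alone:
`Q_a i = a`, with `Q_a` and `Q_i` mutually inverse operators. -/
structure IsInv (W : WeakQuadraticJordan k J) (a i : J) : Prop where
  Q_inv : W.Q a i = a
  mul_inv : W.Q a * W.Q i = 1
  inv_mul : W.Q i * W.Q a = 1

theorem Q_zero (W : WeakQuadraticJordan k J) : W.Q 0 = 0 := by
  simpa using W.Q_smul 0 0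

theorem Qbil_comm (W : WeakQuadraticJordan k J) (a b : J) : W.Qbil a b = W.Qbil b a := by
  rw [W.Qbil_apply, W.Qbil_apply, add_comm a b]
  abel

theorem Q_add (W : WeakQuadraticJordan k J) (a b : J) :
    W.Q (a + b) = W.Q a + W.Qbil a b + W.Q b := by
  rw [W.Qbil_apply]
  abel

theorem Q_neg (W : WeakQuadraticJordan k J) (a : J) : W.Q (-a) = W.Q a := by
  simpa using W.Q_smul (-1) a

theorem Q_sub (W : WeakQuadraticJordan k J) (a b : J) :
    W.Q (a - b) = W.Q a - W.Qbil a b + W.Q b := by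
  rw [sub_eq_add_neg, W.Q_add, W.Q_neg, map_neg, ← sub_eq_add_neg]

theorem Qbil_self (W : WeakQuadraticJordan k J) (a : J) : W.Qbil a a = (2 : k) • W.Q a := by
  rw [W.Qbil_apply, ← two_smul k a, W.Q_smul]
  module

/-- The linearization of `Q_{Q_a b} = Q_a Q_b Q_a` in `b`. -/
theorem Qbil_Q_Q (W : WeakQuadraticJordan k J) (a b c : J) :
    W.Qbil (W.Q a b) (W.Q a c) = W.Q a * W.Qbil b c * W.Q a := by
  rw [W.Qbil_apply, W.Qbil_apply, ← map_add, W.QJ3, W.QJ3, W.QJ3]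
  noncomm_ring

theorem Q_unit_inv (W : WeakQuadraticJordan k J) (a : J) (ha : IsUnit (W.Q a)) :
    (↑ha.unit⁻¹ : Module.End k J) = W.Q ((↑ha.unit⁻¹ : Module.End k J) a) := by
  have h1 : W.Q a * ↑ha.unit⁻¹ = 1 := ha.mul_val_inv
  have h2 : ↑ha.unit⁻¹ * W.Q a = 1 := ha.val_inv_mul
  have h3 : W.Q a ((↑ha.unit⁻¹ : Module.End k J) a) = a := by
    rw [← Module.End.mul_apply, h1, Module.End.one_apply]
  have h4 := W.QJ3 a ((↑ha.unit⁻¹ : Module.End k J) a)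
  rw [h3] at h4
  set i : J := (↑ha.unit⁻¹ : Module.End k J) a
  have h5 : W.Q a * W.Q i = 1 := ha.mul_right_cancel (by rw [← h4, one_mul])
  exact left_inv_eq_right_inv h2 h5

theorem isInv_unit_inv (W : WeakQuadraticJordan k J) (a : J) (ha : IsUnit (W.Q a)) :
    W.IsInv a ((↑ha.unit⁻¹ : Module.End k J) a) where
  Q_inv := by
    have h1 : W.Q a * ↑ha.unit⁻¹ = 1 := ha.mul_val_inv
    rw [← Module.End.mul_apply, h1, Module.End.one_apply]
  mul_inv := by
    rw [← W.Q_unit_inv a ha]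
    exact ha.mul_val_inv
  inv_mul := by
    rw [← W.Q_unit_inv a ha]
    exact ha.val_inv_mul

namespace IsInv

variable {W : WeakQuadraticJordan k J} {a i : J}

theorem Q_Q (h : W.IsInv a i) (x : J) : W.Q a (W.Q i x) = x := by
  rw [← Module.End.mul_apply, h.mul_inv, Module.End.one_apply]

theorem symm (h : W.IsInv a i) : W.IsInv i a where
  Q_inv := by
    have : W.Q i (W.Q a i) = i := by
      rw [← Module.End.mul_apply, h.inv_mul, Module.End.one_apply]
    rwa [h.Q_inv] at this
  mul_inv := h.inv_mul
  inv_mul := h.mul_inv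

/-- The factorization `V_{c,a} = Q_{c,a⁻¹} Q_a`. -/
theorem Qbil_Q (h : W.IsInv a i) (c b : J) : W.Qbil c i (W.Q a b) = W.Qbil c b a := by
  have h1 := congrArg (fun f => f b) (W.Qbil_Q_Q a c i)
  simp only [Module.End.mul_apply] at h1
  rw [h.Q_inv, W.Qbil_comm, W.QJ2] at h1
  rw [← h.symm.Q_Q (W.Qbil c i _), ← h1, h.symm.Q_Q, W.Qbil_comm]

/-- The factorization `V_{a,c} = Q_a Q_{c,a⁻¹}`. -/
theorem Q_Qbil (h : W.IsInv a i) (c y : J) : W.Q a (W.Qbil c i y) = W.Qbil a y c := by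
  have h1 := h.Qbil_Q c (W.Q i y)
  rw [h.Q_Q] at h1
  rw [h1, ← W.QJ2, h.Q_Q]

end IsInv

/-- `Q_{e-c⁻¹} Q_c = Q_e Q_{c-e⁻¹}`: both sides equal `1 - V_{e,c} + Q_e Q_c`. -/
theorem Q_sub_Q (W : WeakQuadraticJordan k J) {c c' e e' : J} (hc : W.IsInv c c')
    (he : W.IsInv e e') (x : J) : W.Q (e - c') (W.Q c x) = W.Q e (W.Q (c - e') x) := by
  simp only [W.Q_sub, LinearMap.add_apply, LinearMap.sub_apply, map_add, map_sub]
  rw [hc.Qbil_Q, he.Q_Qbil, hc.symm.Q_Q, he.Q_Q]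

theorem Q_u (W : WeakQuadraticJordan k J) {c c' : J} (hc : W.IsInv c c') (e : J) :
    W.Q (W.Q c e - c) = W.Q c * W.Q (e - c') * W.Q c := by
  rw [← W.QJ3, map_sub, hc.Q_inv]

/-- `Q_u Q_a⁻¹ = Q_c Q_e` for `u = Q_c e - c` and `a = c - e⁻¹`. -/
theorem Q_u_Q_a' (W : WeakQuadraticJordan k J) {c c' e e' a' : J} (hc : W.IsInv c c')
    (he : W.IsInv e e') (ha : W.IsInv (c - e') a') (x : J) :
    W.Q (W.Q c e - c) (W.Q a' x) = W.Q c (W.Q e x) := by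
  rw [W.Q_u hc, Module.End.mul_apply, Module.End.mul_apply, W.Q_sub_Q hc he, ha.Q_Q]

/-- `Q_u Q_c⁻¹ = Q_c Q_e - V_{c,e} + 1` for `u = Q_c e - c`. -/
theorem Q_u_Q_c' (W : WeakQuadraticJordan k J) {c c' e : J} (hc : W.IsInv c c') (x : J) :
    W.Q (W.Q c e - c) (W.Q c' x) = W.Q c (W.Q e x) - W.Qbil c x e + x := by
  rw [W.Q_u hc, Module.End.mul_apply, Module.End.mul_apply, hc.Q_Q, W.Q_sub]
  simp only [LinearMap.add_apply, LinearMap.sub_apply, map_add, map_sub]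
  rw [hc.Q_Qbil, hc.Q_Q]

/-- Hua's identity `u⁻¹ = a⁻¹ - c⁻¹` for `u = Q_c e - c` and `a = c - e⁻¹`, in the form
`Q_u (a⁻¹ - c⁻¹) = u`. -/
theorem hua (W : WeakQuadraticJordan k J) {c c' e e' a' : J} (hc : W.IsInv c c')
    (he : W.IsInv e e') (ha : W.IsInv (c - e') a') :
    W.Q (W.Q c e - c) (a' - c') = W.Q c e - c := by
  have h1 : W.Q (W.Q c e - c) a' = W.Q c (W.Q e (c - e')) := by
    rw [← W.Q_u_Q_a' hc he ha, ha.symm.Q_inv]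
  have h2 : W.Q (W.Q c e - c) c' = W.Q c (W.Q e c) - W.Qbil c c e + c := by
    rw [← W.Q_u_Q_c' hc, hc.symm.Q_inv]
  rw [map_sub, h1, h2, map_sub, he.Q_inv, map_sub, W.Qbil_self, LinearMap.smul_apply]
  module

end WeakQuadraticJordan

/-- If `δ` is a linear map on a weak quadratic Jordan division algebra with
`δ(a⁻¹) = −ε·δ(a)·Q_a⁻¹` for every invertible `a`, then `δ` is an `ε`-derivation. -/
theorem eps_derivation_of_inverse_rule {k J : Type*} [Field k] [AddCommGroup J] [Module k J]
    (W : WeakQuadraticJordan k J) (hdiv : W.IsDivision)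
    (ε : k) (hε : ε = 1 ∨ ε = -1) (δ : Module.End k J)
    (hδ : ∀ (a : J) (ha : IsUnit (W.Q a)),
      δ ((↑ha.unit⁻¹ : Module.End k J) a) = (-ε) • (↑ha.unit⁻¹ : Module.End k J) (δ a)) :
    W.IsEpsDerivation ε δ := by
  have hεε : ε * ε = 1 := by rcases hε with rfl | rfl <;> simp
  -- the relation `IsInv` packages the inverse, together with the hypothesis on `δ`
  have hinv : ∀ a : J, a ≠ 0 → ∃ i, W.IsInv a i ∧ δ i = (-ε) • W.Q i (δ a) := by
    intro a ha
    refine ⟨_, W.isInv_unit_inv a (hdiv a ha), ?_⟩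
    rw [hδ a (hdiv a ha)]
    exact congrArg (fun f : Module.End k J => (-ε) • f (δ a)) (W.Q_unit_inv a (hdiv a ha))
  intro e c
  rcases eq_or_ne c 0 with rfl | hc
  · simp [W.Q_zero]
  rcases eq_or_ne e 0 with rfl | he
  · simp
  obtain ⟨c', hc', dc'⟩ := hinv c hc
  obtain ⟨e', he', de'⟩ := hinv e he
  by_cases hec : e = c'
  · subst hec
    have h2 : W.Qbil c (δ c) e = (2 : k) • δ c := by
      rw [← hc'.Q_Qbil, W.Qbil_self, LinearMap.smul_apply, map_smul, hc'.Q_Q]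
    rw [hc'.Q_inv, h2, dc', map_smul, hc'.Q_Q, smul_smul, mul_neg, hεε, two_smul]
    simp
  have ha : c - e' ≠ 0 := by
    intro h
    have h1 : c = e' := sub_eq_zero.1 h
    subst h1
    exact hec (by rw [← he'.Q_inv, ← hc'.symm.Q_inv, ← hc'.symm.Q_Q (W.Q e c), he'.symm.Q_Q])
  have hu : W.Q c e - c ≠ 0 := by
    intro h
    have h1 := congrArg (W.Q c') (sub_eq_zero.1 h)
    rw [hc'.symm.Q_Q, hc'.symm.Q_inv] at h1
    exact hec h1
  obtain ⟨a', ha', da'⟩ := hinv _ ha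
  obtain ⟨v, hv, dv⟩ := hinv _ hu
  have hva : v = a' - c' := by
    rw [← hv.symm.Q_Q (a' - c'), W.hua hc' he' ha', hv.symm.Q_inv]
  -- the hypothesis on `δ` at `Q_c e - c`, solved for `δ (Q_c e - c)`
  have key : δ (W.Q c e - c) = (-ε) • W.Q (W.Q c e - c) (δ (a' - c')) := by
    rw [← hva, dv, map_smul, hv.Q_Q, smul_smul, neg_mul_neg, hεε, one_smul]
  have key2 : W.Q (W.Q c e - c) (δ (a' - c')) =
      (-ε) • (W.Q c (W.Q e (δ c)) - W.Q c ((-ε) • δ e)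
        - (W.Q c (W.Q e (δ c)) - W.Qbil c (δ c) e + δ c)) := by
    rw [map_sub, da', dc', ← smul_sub, map_smul, map_sub, W.Q_u_Q_a' hc' he' ha',
      W.Q_u_Q_c' hc', map_sub, de', map_sub, map_smul, he'.Q_Q, map_sub]
  rw [key2, smul_smul, neg_mul_neg, hεε, one_smul, map_sub, sub_eq_iff_eq_add] at key
  rw [key, map_smul]
  module
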